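/- In U the commutator identity Av₁² − v₁²A = (q⁻² + 1)v₂v₁ holds. -/

import Mathlib

noncomputable section

abbrev F : Type := RatFunc ℚ

/-- The deformation parameter `q`. -/
def qq : F := RatFunc.X

/-- The quantum integer `[3] = q² + 1 + q⁻²`. -/
def box3 : F := qq ^ 2 + 1 + (qq⁻¹) ^ 2

/-- The generators `E₁, E₂` of the free algebra. -/
def gen (i : Fin 2) : FreeAlgebra F (Fin 2) := FreeAlgebra.ι F i

/-- The quantized Serre relations. -/
inductive SerreRel : FreeAlgebra F (Fin 2) → FreeAlgebra F (Fin 2) → Prop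
  | rel1 : SerreRel
      (gen 0 ^ 3 * gen 1 - box3 • (gen 0 ^ 2 * gen 1 * gen 0)
        + box3 • (gen 0 * gen 1 * gen 0 ^ 2) - gen 1 * gen 0 ^ 3) 0
  | rel2 : SerreRel
      (gen 1 ^ 3 * gen 0 - box3 • (gen 1 ^ 2 * gen 0 * gen 1)
        + box3 • (gen 1 * gen 0 * gen 1 ^ 2) - gen 0 * gen 1 ^ 3) 0

/-- `U = U_q(𝔫)`, the free algebra on `E₁, E₂` modulo the quantized Serre relations. -/
abbrev U : Type := RingQuot SerreRel

def E1 : U := RingQuot.mkAlgHom F SerreRel (gen 0)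
def E2 : U := RingQuot.mkAlgHom F SerreRel (gen 1)

/-- `A = (1/(q+q⁻¹))(E₂E₁ − q⁻²E₁E₂)`. -/
def Aelt : U := (qq + qq⁻¹)⁻¹ • (E2 * E1 - (qq⁻¹) ^ 2 • (E1 * E2))

def v0 : U := E1
def v1 : U := Aelt * v0 - v0 * Aelt
def v2 : U := Aelt * v1 - v1 * Aelt
def v3 : U := Aelt * v2 - v2 * Aelt

/-- `uᵢ = (1 − q⁻²)⁻²ⁱ vᵢ`. -/
def u0 : U := v0
def u1 : U := ((1 - (qq⁻¹) ^ 2)⁻¹) ^ 2 • v1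
def u2 : U := ((1 - (qq⁻¹) ^ 2)⁻¹) ^ 4 • v2
def u3 : U := ((1 - (qq⁻¹) ^ 2)⁻¹) ^ 6 • v3

/-- `p₁ = u₃u₁ − q²u₂²`. -/
def p1 : U := u3 * u1 - qq ^ 2 • u2 ^ 2
/-- `p₀ = u₂u₀ − q²u₁²`. -/
def p0 : U := u2 * u0 - qq ^ 2 • u1 ^ 2

set_option maxHeartbeats 4000000 in
theorem cert {K R : Type*} [CommRing K] [Ring R] [Algebra K R] (t : K) (x y S1 S2 w1 w2 : R)
    (h1 : S1 = t • (x*x*x*y) - (1+t+t^2) • (x*x*y*x) + (1+t+t^2) • (x*y*x*x) - t • (y*x*x*x))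
    (h2 : S2 = t • (y*y*y*x) - (1+t+t^2) • (y*y*x*y) + (1+t+t^2) • (y*x*y*y) - t • (x*y*y*y))
    (hw1 : w1 = (y*x - t • (x*y)) * x - x * (y*x - t • (x*y)))
    (hw2 : w2 = (y*x - t • (x*y)) * w1 - w1 * (y*x - t • (x*y))) :
    (1+t+2*t^2+t^3+t^4) • (w1*w2 - t • (w2*w1)) =
      ((1)*t^2) • (S2 * (x * x * x * x))
      + ((-1)*t^1 + (-1)*t^2 + (-1)*t^3 + (-1)*t^4) • (x * S2 * (x * x * x))
      + ((1)*t^1 + (1)*t^2 + (2)*t^3 + (1)*t^4 + (1)*t^5) • (x * x * S2 * (x * x))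
      + ((-1)*t^2 + (-1)*t^3 + (-1)*t^4 + (-1)*t^5) • (x * x * x * S2 * (x))
      + ((1)*t^4) • (x * x * x * x * S2)
      + ((1)*t^1 + (2)*t^2 + (3)*t^3 + (2)*t^4 + (2)*t^5) • (S1 * (y * y * x * x))
      + ((-1)*t^0 + (-2)*t^1 + (-2)*t^2 + (-2)*t^3 + (-1)*t^4) • (y * S1 * (y * x * x))
      + ((1)*t^2) • (y * y * S1 * (x * x))
      + ((-1)*t^1 + (-1)*t^2 + (-1)*t^3) • (y * y * x * x * S1)
      + ((-1)*t^1 + (-2)*t^2 + (-3)*t^3 + (-3)*t^4 + (-2)*t^5 + (-1)*t^6) • (S1 * (y * x * y * x))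
      + ((1)*t^0 + (2)*t^1 + (3)*t^2 + (2)*t^3 + (1)*t^4) • (y * S1 * (x * y * x))
      + ((-1)*t^0 + (-1)*t^1 + (-2)*t^2 + (-2)*t^3 + (-2)*t^4 + (-1)*t^5) • (y * x * S1 * (y * x))
      + ((1)*t^1 + (1)*t^2 + (1)*t^3) • (y * x * y * S1 * (x))
      + ((1)*t^0 + (2)*t^1 + (3)*t^2 + (2)*t^3 + (1)*t^4) • (y * x * y * x * S1)
      + ((-1)*t^1 + (-1)*t^2 + (-1)*t^3) • (y * S1 * (x * x * y))
      + ((1)*t^1 + (1)*t^2 + (2)*t^3 + (1)*t^4 + (1)*t^5) • (y * x * S1 * (x * y))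
      + ((-1)*t^3 + (-1)*t^4 + (-1)*t^5) • (y * x * x * S1 * (y))
      + ((-1)*t^3 + (-1)*t^4 + (-1)*t^5) • (S1 * (x * y * y * x))
      + ((-1)*t^2 + (-1)*t^3 + (-2)*t^4 + (-1)*t^5) • (x * S1 * (y * y * x))
      + ((1)*t^0 + (2)*t^1 + (3)*t^2 + (4)*t^3 + (3)*t^4 + (2)*t^5 + (1)*t^6) • (x * y * S1 * (y * x))
      + ((-1)*t^1 + (-2)*t^2 + (-1)*t^3 + (-1)*t^4) • (x * y * y * S1 * (x))
      + ((-1)*t^1 + (-1)*t^2 + (-1)*t^3) • (x * y * y * x * S1)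
      + ((1)*t^2 + (2)*t^3 + (3)*t^4 + (2)*t^5 + (1)*t^6) • (S1 * (x * y * x * y))
      + ((1)*t^3 + (1)*t^4 + (1)*t^5) • (x * S1 * (y * x * y))
      + ((-1)*t^1 + (-2)*t^2 + (-2)*t^3 + (-2)*t^4 + (-1)*t^5 + (-1)*t^6) • (x * y * S1 * (x * y))
      + ((1)*t^2 + (2)*t^3 + (3)*t^4 + (2)*t^5 + (1)*t^6) • (x * y * x * S1 * (y))
      + ((-1)*t^0 + (-2)*t^1 + (-3)*t^2 + (-3)*t^3 + (-2)*t^4 + (-1)*t^5) • (x * y * x * y * S1)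
      + ((-1)*t^3 + (-1)*t^4 + (-1)*t^5) • (S1 * (x * x * y * y))
      + ((1)*t^4) • (x * x * S1 * (y * y))
      + ((-1)*t^2 + (-2)*t^3 + (-2)*t^4 + (-2)*t^5 + (-1)*t^6) • (x * x * y * S1 * (y))
      + ((2)*t^1 + (2)*t^2 + (3)*t^3 + (2)*t^4 + (1)*t^5) • (x * x * y * y * S1) := by
  subst h1 h2 hw2 hw1
  simp only [smul_sub, smul_add, mul_sub, sub_mul, mul_add, add_mul, smul_mul_assoc,
    mul_smul_comm, mul_assoc, smul_smul]
  module

theorem scale_aux {K R : Type*} [CommRing K] [Ring R] [Algebra K R] (t c : K) (x B w1 w2 : R)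
    (hw1 : w1 = B * x - x * B) (hw2 : w2 = B * w1 - w1 * B) (h : w1 * w2 = t • (w2 * w1)) :
    ((c • B) * x - x * (c • B)) *
      ((c • B) * ((c • B) * x - x * (c • B)) - ((c • B) * x - x * (c • B)) * (c • B)) =
    t • (((c • B) * ((c • B) * x - x * (c • B)) - ((c • B) * x - x * (c • B)) * (c • B)) *
      ((c • B) * x - x * (c • B))) := by
  have e1 : (c • B) * x - x * (c • B) = c • w1 := by
    rw [hw1, smul_sub, smul_mul_assoc, mul_smul_comm]
  have e2 : (c • B) * (c • w1) - (c • w1) * (c • B) = (c * c) • w2 := by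
    rw [hw2]
    simp only [smul_sub, smul_mul_assoc, mul_smul_comm, smul_smul]
  rw [e1, e2]
  simp only [smul_mul_assoc, mul_smul_comm, h, smul_smul]
  congr 1
  ring

theorem comm_aux {R : Type*} [Ring R] (a v : R) :
    a * v ^ 2 - v ^ 2 * a = (a * v - v * a) * v + v * (a * v - v * a) := by
  noncomm_ring

theorem qq_ne : qq ≠ 0 := RatFunc.X_ne_zero

theorem serre1 : E1 ^ 3 * E2 - box3 • (E1 ^ 2 * E2 * E1)
        + box3 • (E1 * E2 * E1 ^ 2) - E2 * E1 ^ 3 = 0 := by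
  have h := RingQuot.mkAlgHom_rel F SerreRel.rel1
  simpa [E1, E2] using h

theorem serre2 : E2 ^ 3 * E1 - box3 • (E2 ^ 2 * E1 * E2)
        + box3 • (E2 * E1 * E2 ^ 2) - E1 * E2 ^ 3 = 0 := by
  have h := RingQuot.mkAlgHom_rel F SerreRel.rel2
  simpa [E1, E2] using h

theorem tbox : (qq⁻¹) ^ 2 * box3 = 1 + (qq⁻¹)^2 + ((qq⁻¹)^2)^2 := by
  have := qq_ne
  unfold box3
  field_simp

theorem D_ne : (1 + (qq⁻¹)^2 + 2*((qq⁻¹)^2)^2 + ((qq⁻¹)^2)^3 + ((qq⁻¹)^2)^4) ≠ 0 := by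
  have h0 := qq_ne
  have h : (Polynomial.X^8 + Polynomial.X^6 + 2 * Polynomial.X^4 + Polynomial.X^2 + 1 : Polynomial ℚ) ≠ 0 := by
    intro h
    have := congrArg (Polynomial.eval 0) h
    simp at this
  intro h2
  apply h
  apply RatFunc.algebraMap_injective ℚ
  have e : (qq^8 + qq^6 + 2 * qq^4 + qq^2 + 1) = 0 := by
    have : (qq^8 + qq^6 + 2 * qq^4 + qq^2 + 1) = qq^8 * (1 + (qq⁻¹)^2 + 2*((qq⁻¹)^2)^2 + ((qq⁻¹)^2)^3 + ((qq⁻¹)^2)^4) := by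
      field_simp
    rw [this, h2, mul_zero]
  have h22 : algebraMap (Polynomial ℚ) (RatFunc ℚ) 2 = 2 := map_ofNat _ 2
  simpa [qq, RatFunc.algebraMap_X, h22] using e

theorem key : v1 * v2 = (qq⁻¹)^2 • (v2 * v1) := by
  have c := cert ((qq⁻¹)^2) E1 E2 0 0 _ _ ?_ ?_ rfl rfl
  · simp only [mul_zero, zero_mul, smul_zero, add_zero] at c
    have c := sub_eq_zero.1 ((smul_eq_zero.1 c).resolve_left D_ne)
    exact scale_aux _ _ _ _ _ _ rfl rfl c
  · have h := congrArg (fun z => (qq⁻¹)^2 • z) serre1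
    simp only [smul_sub, smul_add, smul_smul, tbox, smul_zero] at h
    rw [← h]
    simp only [pow_succ, pow_zero, one_mul, mul_assoc]
  · have h := congrArg (fun z => (qq⁻¹)^2 • z) serre2
    simp only [smul_sub, smul_add, smul_smul, tbox, smul_zero] at h
    rw [← h]
    simp only [pow_succ, pow_zero, one_mul, mul_assoc]

/-- In `U` the commutator identity `Av₁² − v₁²A = (q⁻² + 1)v₂v₁` holds. -/
theorem stmt3 :
    Aelt * v1 ^ 2 - v1 ^ 2 * Aelt = (qq ^ (-2 : ℤ) + 1) • (v2 * v1) := by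
  have e : Aelt * v1 ^ 2 - v1 ^ 2 * Aelt = v2 * v1 + v1 * v2 := comm_aux _ _
  have hq : qq ^ (-2 : ℤ) = (qq⁻¹)^2 := by
    rw [zpow_neg, inv_pow]; rfl
  rw [e, key, hq, add_smul, one_smul, add_comm]
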